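/- Let ~ be the smallest monoid congruence on the free monoid over Θ generated by the relations cC = ∅, hH = ∅, cF = ∅, hF = ∅ (a burger immediately followed by a matching order cancels to the empty word) and cH = Hc, hC = Ch (a burger commutes with the opposite-type order). Then every finite word W over Θ is equivalent under ~ to exactly one reduced word; consequently the quotient monoid is in bijection with the set of reduced words. -/

import Mathlib

open MeasureTheory ProbabilityTheory Filter Topology
open scoped ENNReal NNReal

/-- The five-symbol alphabet Θ: cheeseburger, hamburger, cheeseburger order,
hamburger order, flexible order. -/
inductive Burger where
  | c | h | C | H | F
deriving DecidableEq

instance : MeasurableSpace Burger := ⊤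

namespace Burger

/-- `true` iff the symbol is a burger (`c` or `h`). -/
def isBurgerSym : Burger → Bool
  | c => true
  | h => true
  | _ => false

/-- `true` iff the symbol is an order (`C`, `H` or `F`). -/
def isOrderSym (s : Burger) : Bool := !s.isBurgerSym

/-- One reduction step acting on a state `(O, B)` where `O` is the list of unfulfilled
orders (most recent first) and `B` is the burger stack (top first). -/
def stepRev (s : List Burger × List Burger) (x : Burger) : List Burger × List Burger :=
  match x with
  | .c => (s.1, .c :: s.2)
  | .h => (s.1, .h :: s.2)
  | .C => if Burger.c ∈ s.2 then (s.1, s.2.erase .c) else (.C :: s.1, s.2)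
  | .H => if Burger.h ∈ s.2 then (s.1, s.2.erase .h) else (.H :: s.1, s.2)
  | .F => if s.2 = [] then (.F :: s.1, s.2) else (s.1, s.2.tail)

/-- The reduced word `W̄` of a word `W`: the unfulfilled orders (in order of
appearance) followed by the unconsumed burgers (in order of appearance). -/
def reduce (w : List Burger) : List Burger :=
  let s := w.foldl stepRev ([], [])
  s.1.reverse ++ s.2.reverse

/-- A word is reduced if no burger symbol appears to the left of any order symbol,
i.e. it is a list of orders followed by a list of burgers. -/
def IsReduced (w : List Burger) : Prop :=
  ∃ o b : List Burger, w = o ++ b ∧ (∀ x ∈ o, x.isOrderSym) ∧ (∀ x ∈ b, x.isBurgerSym)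

/-- The word `X(a) X(a+1) ⋯ X(b)`. -/
def word (X : ℤ → Burger) (a b : ℤ) : List Burger :=
  (List.range (b + 1 - a).toNat).map fun i => X (a + i)

/-- The reduced word `X(a,b)`. -/
def rword (X : ℤ → Burger) (a b : ℤ) : List Burger := reduce (word X a b)

/-- `matched X m n` : the burger produced at time `m` is consumed by the order at time `n`;
i.e. `X m ∈ {c,h}` and `n` is the smallest integer `> m` such that the reduced word
`X(m,n)` contains no burger symbol of the same type as `X m`. -/
def matched (X : ℤ → Burger) (m n : ℤ) : Prop :=
  m < n ∧ (X m = .c ∨ X m = .h) ∧ X m ∉ rword X m n ∧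
    ∀ k, m < k → k < n → X m ∈ rword X m k

/-- The generating relations: a burger immediately followed by a matching order cancels,
and a burger commutes with the opposite-type order. -/
def burgerRel : FreeMonoid Burger → FreeMonoid Burger → Prop := fun x y =>
  (x = FreeMonoid.ofList [Burger.c, Burger.C] ∧ y = 1) ∨
  (x = FreeMonoid.ofList [Burger.h, Burger.H] ∧ y = 1) ∨
  (x = FreeMonoid.ofList [Burger.c, Burger.F] ∧ y = 1) ∨
  (x = FreeMonoid.ofList [Burger.h, Burger.F] ∧ y = 1) ∨
  (x = FreeMonoid.ofList [Burger.c, Burger.H] ∧ y = FreeMonoid.ofList [Burger.H, Burger.c]) ∨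
  (x = FreeMonoid.ofList [Burger.h, Burger.C] ∧ y = FreeMonoid.ofList [Burger.C, Burger.h])

end Burger

open Burger

/-!
Reading a word from left to right with `stepRev` is a right action of the free monoid on states
(pending orders, burger stack). Both sides of every defining relation act in the same way, so
`reduce` is constant on congruence classes; since it fixes reduced words, each class contains at
most one of them. Conversely, each step of `stepRev` is a computation in the quotient monoid: an
order moves left through burgers of the opposite type until it cancels a matching burger or joins
the earlier orders. Hence every word is congruent to its reduction.
-/

namespace Burger

section General

variable {α β M : Type*}

theorem nonempty_quotient_equiv_of_existsUnique (s : Setoid α) {p : α → Prop}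
    (hp : ∀ a, ∃! b, p b ∧ s a b) : Nonempty (Quotient s ≃ {b // p b}) := by
  have hbij : Function.Bijective fun b : {b // p b} => Quotient.mk s b.1 := by
    constructor
    · intro a b hab
      exact Subtype.ext <| (hp a.1).unique ⟨a.2, s.refl a.1⟩ ⟨b.2, Quotient.exact hab⟩
    · intro q
      obtain ⟨a, rfl⟩ := Quotient.exists_rep q
      obtain ⟨b, ⟨hb, hab⟩, -⟩ := hp a
      exact ⟨⟨b, hb⟩, (Quotient.sound hab).symm⟩
  exact ⟨(Equiv.ofBijective _ hbij).symm⟩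

/-- The congruence identifying words that act in the same way on every state of the automaton
with transition function `f`, letters being read from left to right. -/
def foldlCon (f : β → α → β) : Con (FreeMonoid α) where
  r v w := ∀ s, v.toList.foldl f s = w.toList.foldl f s
  iseqv := ⟨fun _ _ => rfl, fun hvw s => (hvw s).symm, fun huv hvw s => (huv s).trans (hvw s)⟩
  mul' hv hw s := by simp only [FreeMonoid.toList_mul, List.foldl_append, hv s, hw]

variable [Monoid M] {f : α → M} {a : α} {m : M} {l : List α}

theorem commute_prod_map (hcomm : ∀ b ∈ l, Commute (f b) m) : Commute (l.map f).prod m :=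
  Commute.list_prod_left _ _ (List.forall_mem_map.2 hcomm)

theorem prod_map_reverse_mul_eq_erase [DecidableEq α] (ha : a ∈ l) (hcancel : f a * m = 1)
    (hcomm : ∀ b ∈ l, b ≠ a → Commute (f b) m) :
    (l.reverse.map f).prod * m = ((l.erase a).reverse.map f).prod := by
  obtain ⟨t, r, hat, rfl, herase⟩ := List.exists_erase_eq ha
  have ht : Commute (t.reverse.map f).prod m := commute_prod_map fun b hb =>
    have hbt : b ∈ t := List.mem_reverse.1 hb
    hcomm b (List.mem_append_left _ hbt) (ne_of_mem_of_not_mem hbt hat)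
  calc
    ((t ++ a :: r).reverse.map f).prod * m
    _ = (r.reverse.map f).prod * (f a * ((t.reverse.map f).prod * m)) := by simp [mul_assoc]
    _ = (r.reverse.map f).prod * (f a * m * (t.reverse.map f).prod) := by rw [ht.eq, mul_assoc]
    _ = (((t ++ a :: r).erase a).reverse.map f).prod := by simp [hcancel, herase]

end General

theorem isBurgerSym_iff {x : Burger} : x.isBurgerSym ↔ x = c ∨ x = h := by
  cases x <;> simp [isBurgerSym]

/-- The image of a symbol in the monoid presented by `burgerRel`. The image of a word `w` is
written `(w.map gen).prod`. -/
def gen (x : Burger) : (conGen burgerRel).Quotient := (FreeMonoid.of x : FreeMonoid Burger)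

theorem coe_ofList_eq_prod_map_gen (w : List Burger) :
    ((FreeMonoid.ofList w : FreeMonoid Burger) : (conGen burgerRel).Quotient) =
      (w.map gen).prod := by
  induction w with
  | nil => rfl
  | cons x w ih => rw [FreeMonoid.ofList_cons, Con.coe_mul, ih, List.map_cons, List.prod_cons, gen]

theorem prod_map_gen_eq_of_burgerRel {v w : List Burger}
    (hvw : burgerRel (FreeMonoid.ofList v) (FreeMonoid.ofList w)) :
    (v.map gen).prod = (w.map gen).prod := by
  rw [← coe_ofList_eq_prod_map_gen, ← coe_ofList_eq_prod_map_gen, Con.eq]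
  exact ConGen.Rel.of _ _ hvw

theorem gen_c_mul_gen_C : gen c * gen C = 1 := by
  simpa using prod_map_gen_eq_of_burgerRel (v := [c, C]) (w := []) (by simp [burgerRel])

theorem gen_h_mul_gen_H : gen h * gen H = 1 := by
  simpa using prod_map_gen_eq_of_burgerRel (v := [h, H]) (w := []) (by simp [burgerRel])

theorem gen_mul_gen_F {x : Burger} (hx : x.isBurgerSym) : gen x * gen F = 1 := by
  rcases isBurgerSym_iff.1 hx with rfl | rfl
  · simpa using prod_map_gen_eq_of_burgerRel (v := [c, F]) (w := []) (by simp [burgerRel])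
  · simpa using prod_map_gen_eq_of_burgerRel (v := [h, F]) (w := []) (by simp [burgerRel])

theorem commute_gen_C {x : Burger} (hx : x.isBurgerSym) (hne : x ≠ c) :
    Commute (gen x) (gen C) := by
  obtain rfl : x = h := (isBurgerSym_iff.1 hx).resolve_left hne
  simpa [commute_iff_eq] using
    prod_map_gen_eq_of_burgerRel (v := [h, C]) (w := [C, h]) (by simp [burgerRel])

theorem commute_gen_H {x : Burger} (hx : x.isBurgerSym) (hne : x ≠ h) :
    Commute (gen x) (gen H) := by
  obtain rfl : x = c := (isBurgerSym_iff.1 hx).resolve_right hne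
  simpa [commute_iff_eq] using
    prod_map_gen_eq_of_burgerRel (v := [c, H]) (w := [H, c]) (by simp [burgerRel])

/-- The word described by a state of `stepRev`. Both components of a state list the most recent
symbol first, hence the reversals. -/
def stateWord (s : List Burger × List Burger) : List Burger := s.1.reverse ++ s.2.reverse

/-- A state whose first component holds only orders and whose second holds only burgers. -/
def IsValidState (s : List Burger × List Burger) : Prop :=
  (∀ x ∈ s.1, x.isOrderSym) ∧ ∀ x ∈ s.2, x.isBurgerSym

theorem isValidState_nil : IsValidState ([], []) := by simp [IsValidState]

theorem IsValidState.isReduced_stateWord {s : List Burger × List Burger} (hs : IsValidState s) :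
    IsReduced (stateWord s) :=
  ⟨_, _, rfl, fun x hx => hs.1 x (List.mem_reverse.1 hx),
    fun x hx => hs.2 x (List.mem_reverse.1 hx)⟩

theorem IsValidState.stepRev {s : List Burger × List Burger} (hs : IsValidState s) (x : Burger) :
    IsValidState (stepRev s x) := by
  obtain ⟨O, B⟩ := s
  obtain ⟨hO, hB⟩ := hs
  have hcons {y : Burger} (hy : y.isOrderSym) : IsValidState (y :: O, B) :=
    ⟨List.forall_mem_cons.2 ⟨hy, hO⟩, hB⟩
  have herase (y : Burger) : IsValidState (O, B.erase y) :=
    ⟨hO, fun x hx => hB x (List.mem_of_mem_erase hx)⟩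
  cases x with
  | c => exact ⟨hO, List.forall_mem_cons.2 ⟨rfl, hB⟩⟩
  | h => exact ⟨hO, List.forall_mem_cons.2 ⟨rfl, hB⟩⟩
  | C => rw [Burger.stepRev]; split_ifs; exacts [herase c, hcons rfl]
  | H => rw [Burger.stepRev]; split_ifs; exacts [herase h, hcons rfl]
  | F =>
    rw [Burger.stepRev]
    split_ifs
    exacts [hcons rfl, ⟨hO, fun x hx => hB x (List.mem_of_mem_tail hx)⟩]

theorem IsValidState.foldl_stepRev {s : List Burger × List Burger} (hs : IsValidState s)
    (w : List Burger) : IsValidState (w.foldl Burger.stepRev s) := by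
  induction w generalizing s with
  | nil => exact hs
  | cons x _ ih => exact ih (hs.stepRev x)

theorem isReduced_reduce (w : List Burger) : IsReduced (reduce w) :=
  (isValidState_nil.foldl_stepRev w).isReduced_stateWord

theorem prod_map_gen_stateWord (s : List Burger × List Burger) :
    ((stateWord s).map gen).prod = (s.1.reverse.map gen).prod * (s.2.reverse.map gen).prod := by
  rw [stateWord, List.map_append, List.prod_append]

theorem prod_map_gen_stateWord_ite {b x : Burger} (O : List Burger) {B : List Burger}
    (hcancel : gen b * gen x = 1) (hcomm : ∀ y ∈ B, y ≠ b → Commute (gen y) (gen x)) :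
    ((stateWord (if b ∈ B then (O, B.erase b) else (x :: O, B))).map gen).prod =
      ((stateWord (O, B)).map gen).prod * gen x := by
  simp only [prod_map_gen_stateWord (O, B), mul_assoc]
  split_ifs with hb
  · rw [prod_map_reverse_mul_eq_erase hb hcancel hcomm, prod_map_gen_stateWord]
  · have hcommB : Commute (B.reverse.map gen).prod (gen x) := commute_prod_map fun y hy =>
      have hyB : y ∈ B := List.mem_reverse.1 hy
      hcomm y hyB (ne_of_mem_of_not_mem hyB hb)
    rw [hcommB.eq]
    simp [stateWord]

theorem prod_map_gen_stateWord_stepRev {s : List Burger × List Burger}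
    (hs : ∀ y ∈ s.2, y.isBurgerSym) (x : Burger) :
    ((stateWord (stepRev s x)).map gen).prod = ((stateWord s).map gen).prod * gen x := by
  obtain ⟨O, B⟩ := s
  cases x with
  | c => simp [stepRev, stateWord, mul_assoc]
  | h => simp [stepRev, stateWord, mul_assoc]
  | C => exact prod_map_gen_stateWord_ite O gen_c_mul_gen_C fun y hy => commute_gen_C (hs y hy)
  | H => exact prod_map_gen_stateWord_ite O gen_h_mul_gen_H fun y hy => commute_gen_H (hs y hy)
  | F =>
    cases B with
    | nil => simp [stepRev, stateWord]
    | cons y B => simp [stepRev, stateWord, mul_assoc, gen_mul_gen_F (hs y List.mem_cons_self)]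

theorem prod_map_gen_stateWord_foldl_stepRev {s : List Burger × List Burger}
    (hs : IsValidState s) (w : List Burger) :
    ((stateWord (w.foldl stepRev s)).map gen).prod =
      ((stateWord s).map gen).prod * (w.map gen).prod := by
  induction w generalizing s with
  | nil => simp
  | cons x w ih =>
    rw [List.foldl_cons, ih (hs.stepRev x), prod_map_gen_stateWord_stepRev hs.2, mul_assoc,
      List.map_cons, List.prod_cons]

theorem conGen_burgerRel_reduce (W : FreeMonoid Burger) :
    conGen burgerRel W (FreeMonoid.ofList (reduce W.toList)) := by
  have hprod : ((reduce W.toList).map gen).prod = (W.toList.map gen).prod := by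
    simpa [reduce, stateWord] using
      prod_map_gen_stateWord_foldl_stepRev isValidState_nil W.toList
  rw [← coe_ofList_eq_prod_map_gen, ← coe_ofList_eq_prod_map_gen, FreeMonoid.ofList_toList] at hprod
  exact (Con.eq _).1 hprod.symm

theorem foldlCon_stepRev_of_burgerRel {V W : FreeMonoid Burger} (hVW : burgerRel V W) :
    foldlCon stepRev V W := by
  rintro ⟨O, B⟩
  rcases hVW with ⟨rfl, rfl⟩ | ⟨rfl, rfl⟩ | ⟨rfl, rfl⟩ | ⟨rfl, rfl⟩ | ⟨rfl, rfl⟩ | ⟨rfl, rfl⟩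
  · simp [stepRev]
  · simp [stepRev]
  · simp [stepRev]
  · simp [stepRev]
  · by_cases hh : h ∈ B <;> simp [stepRev, hh]
  · by_cases hc : c ∈ B <;> simp [stepRev, hc]

theorem reduce_eq_of_conGen_burgerRel {V W : FreeMonoid Burger} (hVW : conGen burgerRel V W) :
    reduce V.toList = reduce W.toList := by
  have hle : conGen burgerRel ≤ foldlCon stepRev :=
    Con.conGen_le.2 fun _ _ => foldlCon_stepRev_of_burgerRel
  exact congrArg stateWord (hle hVW ([], []))

theorem stepRev_of_isOrderSym {x : Burger} (hx : x.isOrderSym) (O : List Burger) :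
    stepRev (O, []) x = (x :: O, []) := by
  cases x <;> simp_all [stepRev, isOrderSym, isBurgerSym]

theorem stepRev_of_isBurgerSym {x : Burger} (hx : x.isBurgerSym) (O B : List Burger) :
    stepRev (O, B) x = (O, x :: B) := by
  rcases isBurgerSym_iff.1 hx with rfl | rfl <;> rfl

theorem foldl_stepRev_of_forall_isOrderSym {w : List Burger} (hw : ∀ x ∈ w, x.isOrderSym)
    (O : List Burger) : w.foldl stepRev (O, []) = (w.reverse ++ O, []) := by
  induction w generalizing O with
  | nil => rfl
  | cons x w ih =>
    obtain ⟨hx, hw⟩ := List.forall_mem_cons.1 hw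
    simp [stepRev_of_isOrderSym hx, ih hw]

theorem foldl_stepRev_of_forall_isBurgerSym {w : List Burger} (hw : ∀ x ∈ w, x.isBurgerSym)
    (O B : List Burger) : w.foldl stepRev (O, B) = (O, w.reverse ++ B) := by
  induction w generalizing B with
  | nil => rfl
  | cons x w ih =>
    obtain ⟨hx, hw⟩ := List.forall_mem_cons.1 hw
    simp [stepRev_of_isBurgerSym hx, ih hw]

theorem IsReduced.reduce_eq {w : List Burger} (hw : IsReduced w) : reduce w = w := by
  obtain ⟨o, b, rfl, ho, hb⟩ := hw
  simp [reduce, foldl_stepRev_of_forall_isOrderSym ho, foldl_stepRev_of_forall_isBurgerSym hb]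

end Burger

/-- Every word over Θ is equivalent, modulo the smallest monoid congruence generated by
the cancellation and commutation relations, to exactly one reduced word; consequently the
quotient monoid is in bijection with the set of reduced words. -/
theorem unique_reduced_word :
    (∀ W : FreeMonoid Burger, ∃! V : FreeMonoid Burger,
        IsReduced (FreeMonoid.toList V) ∧ conGen burgerRel W V) ∧
    Nonempty ((conGen burgerRel).Quotient ≃
        {V : FreeMonoid Burger // IsReduced (FreeMonoid.toList V)}) := by
  have hunique (W : FreeMonoid Burger) : ∃! V : FreeMonoid Burger,
      IsReduced (FreeMonoid.toList V) ∧ conGen burgerRel W V := by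
    refine ⟨FreeMonoid.ofList (reduce W.toList),
      ⟨isReduced_reduce _, conGen_burgerRel_reduce W⟩, ?_⟩
    rintro V ⟨hV, hWV⟩
    have hWV_reduce : reduce W.toList = V.toList :=
      (reduce_eq_of_conGen_burgerRel hWV).trans hV.reduce_eq
    rw [hWV_reduce, FreeMonoid.ofList_toList]
  exact ⟨hunique, nonempty_quotient_equiv_of_existsUnique (conGen burgerRel).toSetoid hunique⟩
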